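/- For any interpretation I of the fresh domain variables vf_1,...,vf_n and the symbols occurring in the transformed argument terms Ŝ_{j,l}, and any i with 1 ≤ i ≤ n, the nested-ITE term U_i satisfies I[U_i] = I(vf_j), where j = lm_I(i) is the least matching value of i under I. -/

import Mathlib

mutual
inductive EufTerm (Fn Pr : Type) : Type
  | app : Fn → List (EufTerm Fn Pr) → EufTerm Fn Pr
  | ite : EufFormula Fn Pr → EufTerm Fn Pr → EufTerm Fn Pr → EufTerm Fn Pr
inductive EufFormula (Fn Pr : Type) : Type
  | tt : EufFormula Fn Pr
  | ff : EufFormula Fn Pr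
  | not : EufFormula Fn Pr → EufFormula Fn Pr
  | and : EufFormula Fn Pr → EufFormula Fn Pr → EufFormula Fn Pr
  | or : EufFormula Fn Pr → EufFormula Fn Pr → EufFormula Fn Pr
  | eq : EufTerm Fn Pr → EufTerm Fn Pr → EufFormula Fn Pr
  | papp : Pr → List (EufTerm Fn Pr) → EufFormula Fn Pr
end

structure Interp (Fn Pr : Type) (D : Type u) where
  fn : Fn → List D → D
  pr : Pr → List D → Bool

open Classical in
mutual
noncomputable def evalT {Fn Pr : Type} {D : Type} (I : Interp Fn Pr D) : EufTerm Fn Pr → D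
  | .app f args => I.fn f (args.attach.map (fun t => evalT I t.1))
  | .ite G T1 T2 => if evalF I G then evalT I T1 else evalT I T2
termination_by t => sizeOf t
decreasing_by
  all_goals simp_wf
  all_goals try omega
  all_goals (have := List.sizeOf_lt_of_mem t.2; omega)
noncomputable def evalF {Fn Pr : Type} {D : Type} (I : Interp Fn Pr D) : EufFormula Fn Pr → Bool
  | .tt => true
  | .ff => false
  | .not G => !evalF I G
  | .and G1 G2 => evalF I G1 && evalF I G2
  | .or G1 G2 => evalF I G1 || evalF I G2
  | .eq T1 T2 => decide (evalT I T1 = evalT I T2)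
  | .papp p args => I.pr p (args.attach.map (fun t => evalT I t.1))
termination_by g => sizeOf g
decreasing_by
  all_goals simp_wf
  all_goals try omega
  all_goals (have := List.sizeOf_lt_of_mem t.2; omega)
end
def ValidOn {Fn Pr : Type} (F : EufFormula Fn Pr) (D : Type) : Prop :=
  ∀ I : Interp Fn Pr D, evalF I F = true

def UniversallyValid {Fn Pr : Type} (F : EufFormula Fn Pr) : Prop :=
  ∀ D : Type, Nonempty D → ValidOn F D

/-- Expressions: terms or formulas. -/
inductive EufExpr (Fn Pr : Type) : Type
  | t : EufTerm Fn Pr → EufExpr Fn Pr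
  | f : EufFormula Fn Pr → EufExpr Fn Pr

/-- Immediate (proper) subexpression relation. -/
inductive ImmSub {Fn Pr : Type} : EufExpr Fn Pr → EufExpr Fn Pr → Prop
  | appArg {g : Fn} {args : List (EufTerm Fn Pr)} {T : EufTerm Fn Pr} :
      T ∈ args → ImmSub (.t T) (.t (.app g args))
  | iteC {G : EufFormula Fn Pr} {T1 T2 : EufTerm Fn Pr} : ImmSub (.f G) (.t (.ite G T1 T2))
  | ite1 {G : EufFormula Fn Pr} {T1 T2 : EufTerm Fn Pr} : ImmSub (.t T1) (.t (.ite G T1 T2))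
  | ite2 {G : EufFormula Fn Pr} {T1 T2 : EufTerm Fn Pr} : ImmSub (.t T2) (.t (.ite G T1 T2))
  | not {G : EufFormula Fn Pr} : ImmSub (.f G) (.f (.not G))
  | andL {G1 G2 : EufFormula Fn Pr} : ImmSub (.f G1) (.f (.and G1 G2))
  | andR {G1 G2 : EufFormula Fn Pr} : ImmSub (.f G2) (.f (.and G1 G2))
  | orL {G1 G2 : EufFormula Fn Pr} : ImmSub (.f G1) (.f (.or G1 G2))
  | orR {G1 G2 : EufFormula Fn Pr} : ImmSub (.f G2) (.f (.or G1 G2))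
  | eqL {T1 T2 : EufTerm Fn Pr} : ImmSub (.t T1) (.f (.eq T1 T2))
  | eqR {T1 T2 : EufTerm Fn Pr} : ImmSub (.t T2) (.f (.eq T1 T2))
  | pappArg {p : Pr} {args : List (EufTerm Fn Pr)} {T : EufTerm Fn Pr} :
      T ∈ args → ImmSub (.t T) (.f (.papp p args))

/-- `SubExpr a b`: `a` occurs (as a subexpression) in `b`. -/
def SubExpr {Fn Pr : Type} (a b : EufExpr Fn Pr) : Prop := Relation.ReflTransGen ImmSub a b

def TermInT {Fn Pr : Type} (T S : EufTerm Fn Pr) : Prop := SubExpr (.t T) (.t S)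
def TermInF {Fn Pr : Type} (T : EufTerm Fn Pr) (F : EufFormula Fn Pr) : Prop :=
  SubExpr (.t T) (.f F)
def FormulaInT {Fn Pr : Type} (G : EufFormula Fn Pr) (S : EufTerm Fn Pr) : Prop :=
  SubExpr (.f G) (.t S)
def FormulaInF {Fn Pr : Type} (G F : EufFormula Fn Pr) : Prop := SubExpr (.f G) (.f F)

def IsAppTerm {Fn Pr : Type} : EufTerm Fn Pr → Prop
  | .app _ _ => True
  | _ => False

/-- `𝒯(F)`: the function application terms occurring in `F`. -/
def AppTermsF {Fn Pr : Type} (F : EufFormula Fn Pr) : Set (EufTerm Fn Pr) :=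
  {T | IsAppTerm T ∧ TermInF T F}

/-- A function symbol occurs in `F` when some application of it occurs in `F`. -/
def FnInF {Fn Pr : Type} (g : Fn) (F : EufFormula Fn Pr) : Prop :=
  ∃ args, TermInF (EufTerm.app g args) F

def PrInF {Fn Pr : Type} (p : Pr) (F : EufFormula Fn Pr) : Prop :=
  ∃ args, FormulaInF (EufFormula.papp p args) F

/-- `I` is diverse for `F` with respect to the set `Sg` of function symbols. -/
def DiverseFor {Fn Pr D : Type} (I : Interp Fn Pr D) (F : EufFormula Fn Pr)
    (Sg : Set Fn) : Prop :=
  ∀ (g : Fn) (args : List (EufTerm Fn Pr)), g ∈ Sg →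
    TermInF (EufTerm.app g args) F →
    ∀ T2 ∈ AppTermsF F, evalT I (EufTerm.app g args) = evalT I T2 →
      ∃ args2, T2 = EufTerm.app g args2 ∧
        List.Forall₂ (fun a b => evalT I a = evalT I b) args args2

mutual
/-- PEUF g-terms, where `isP` designates the p-function symbols. -/
inductive IsGTerm {Fn Pr : Type} (isP : Fn → Prop) : EufTerm Fn Pr → Prop
  | ite {G : EufFormula Fn Pr} {T1 T2 : EufTerm Fn Pr} :
      IsGFormula isP G → IsGTerm isP T1 → IsGTerm isP T2 → IsGTerm isP (.ite G T1 T2)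
  | app {g : Fn} {args : List (EufTerm Fn Pr)} :
      ¬ isP g → (∀ T ∈ args, IsPTerm isP T) → IsGTerm isP (.app g args)
/-- PEUF p-terms. -/
inductive IsPTerm {Fn Pr : Type} (isP : Fn → Prop) : EufTerm Fn Pr → Prop
  | g {T : EufTerm Fn Pr} : IsGTerm isP T → IsPTerm isP T
  | ite {G : EufFormula Fn Pr} {T1 T2 : EufTerm Fn Pr} :
      IsGFormula isP G → IsPTerm isP T1 → IsPTerm isP T2 → IsPTerm isP (.ite G T1 T2)
  | app {g : Fn} {args : List (EufTerm Fn Pr)} :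
      isP g → (∀ T ∈ args, IsPTerm isP T) → IsPTerm isP (.app g args)
/-- PEUF g-formulas. -/
inductive IsGFormula {Fn Pr : Type} (isP : Fn → Prop) : EufFormula Fn Pr → Prop
  | tt : IsGFormula isP .tt
  | ff : IsGFormula isP .ff
  | not {G : EufFormula Fn Pr} : IsGFormula isP G → IsGFormula isP (.not G)
  | and {G1 G2 : EufFormula Fn Pr} :
      IsGFormula isP G1 → IsGFormula isP G2 → IsGFormula isP (.and G1 G2)
  | or {G1 G2 : EufFormula Fn Pr} :
      IsGFormula isP G1 → IsGFormula isP G2 → IsGFormula isP (.or G1 G2)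
  | eq {T1 T2 : EufTerm Fn Pr} :
      IsGTerm isP T1 → IsGTerm isP T2 → IsGFormula isP (.eq T1 T2)
  | papp {p : Pr} {args : List (EufTerm Fn Pr)} :
      (∀ T ∈ args, IsPTerm isP T) → IsGFormula isP (.papp p args)
/-- PEUF p-formulas. -/
inductive IsPFormula {Fn Pr : Type} (isP : Fn → Prop) : EufFormula Fn Pr → Prop
  | g {G : EufFormula Fn Pr} : IsGFormula isP G → IsPFormula isP G
  | and {G1 G2 : EufFormula Fn Pr} :
      IsPFormula isP G1 → IsPFormula isP G2 → IsPFormula isP (.and G1 G2)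
  | or {G1 G2 : EufFormula Fn Pr} :
      IsPFormula isP G1 → IsPFormula isP G2 → IsPFormula isP (.or G1 G2)
  | eq {T1 T2 : EufTerm Fn Pr} :
      IsPTerm isP T1 → IsPTerm isP T2 → IsPFormula isP (.eq T1 T2)
end

/-- The p-function symbols occurring in `F`. -/
def PSymbolsIn {Fn Pr : Type} (isP : Fn → Prop) (F : EufFormula Fn Pr) : Set Fn :=
  {g | isP g ∧ FnInF g F}

/-- `I` is maximally diverse for the p-formula `F`. -/
def MaxDiverse {Fn Pr D : Type} (isP : Fn → Prop) (I : Interp Fn Pr D)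
    (F : EufFormula Fn Pr) : Prop :=
  DiverseFor I F (PSymbolsIn isP F)

/-- `I'` refines `I` on the term set `Ts`. -/
def RefinesOn {Fn Pr D D' : Type} (I' : Interp Fn Pr D') (I : Interp Fn Pr D)
    (Ts : Set (EufTerm Fn Pr)) : Prop :=
  ∀ T1 ∈ Ts, ∀ T2 ∈ Ts, evalT I' T1 = evalT I' T2 → evalT I T1 = evalT I T2

def ProperRefinesOn {Fn Pr D D' : Type} (I' : Interp Fn Pr D') (I : Interp Fn Pr D)
    (Ts : Set (EufTerm Fn Pr)) : Prop :=
  RefinesOn I' I Ts ∧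
    ∃ T1 ∈ Ts, ∃ T2 ∈ Ts, evalT I T1 = evalT I T2 ∧ evalT I' T1 ≠ evalT I' T2
open Classical in
mutual
/-- Substitute the term `B` for each instance of the term `A`. -/
noncomputable def substT {Fn Pr : Type} (A B : EufTerm Fn Pr) : EufTerm Fn Pr → EufTerm Fn Pr
  | .app g args =>
      if EufTerm.app g args = A then B
      else .app g (args.attach.map (fun t => substT A B t.1))
  | .ite G T1 T2 =>
      if EufTerm.ite G T1 T2 = A then B
      else .ite (substF A B G) (substT A B T1) (substT A B T2)
termination_by t => sizeOf t
decreasing_by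
  all_goals simp_wf
  all_goals try omega
  all_goals (have := List.sizeOf_lt_of_mem t.2; omega)
noncomputable def substF {Fn Pr : Type} (A B : EufTerm Fn Pr) : EufFormula Fn Pr → EufFormula Fn Pr
  | .tt => .tt
  | .ff => .ff
  | .not G => .not (substF A B G)
  | .and G1 G2 => .and (substF A B G1) (substF A B G2)
  | .or G1 G2 => .or (substF A B G1) (substF A B G2)
  | .eq T1 T2 => .eq (substT A B T1) (substT A B T2)
  | .papp p args => .papp p (args.attach.map (fun t => substT A B t.1))
termination_by g => sizeOf g
decreasing_by
  all_goals simp_wf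
  all_goals try omega
  all_goals (have := List.sizeOf_lt_of_mem t.2; omega)
end

open Classical in
mutual
/-- Substitute the formula `B` for each instance of the formula `A` inside a term. -/
noncomputable def fsubstT {Fn Pr : Type} (A B : EufFormula Fn Pr) : EufTerm Fn Pr → EufTerm Fn Pr
  | .app g args => .app g (args.attach.map (fun t => fsubstT A B t.1))
  | .ite G T1 T2 => .ite (fsubstF A B G) (fsubstT A B T1) (fsubstT A B T2)
termination_by t => sizeOf t
decreasing_by
  all_goals simp_wf
  all_goals try omega
  all_goals (have := List.sizeOf_lt_of_mem t.2; omega)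
/-- Substitute the formula `B` for each instance of the formula `A`. -/
noncomputable def fsubstF {Fn Pr : Type} (A B : EufFormula Fn Pr) : EufFormula Fn Pr → EufFormula Fn Pr
  | .tt => if EufFormula.tt = A then B else .tt
  | .ff => if EufFormula.ff = A then B else .ff
  | .not G => if EufFormula.not G = A then B else .not (fsubstF A B G)
  | .and G1 G2 => if EufFormula.and G1 G2 = A then B else .and (fsubstF A B G1) (fsubstF A B G2)
  | .or G1 G2 => if EufFormula.or G1 G2 = A then B else .or (fsubstF A B G1) (fsubstF A B G2)
  | .eq T1 T2 => if EufFormula.eq T1 T2 = A then B else .eq (fsubstT A B T1) (fsubstT A B T2)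
  | .papp p args =>
      if EufFormula.papp p args = A then B
      else .papp p (args.attach.map (fun t => fsubstT A B t.1))
termination_by g => sizeOf g
decreasing_by
  all_goals simp_wf
  all_goals try omega
  all_goals (have := List.sizeOf_lt_of_mem t.2; omega)
end
/-- The formula `C_{i,j}`: conjunction of the equations between transformed arguments. -/
def Cform {Fn Pr : Type} (hatS : ℕ → ℕ → EufTerm Fn Pr) (k i j : ℕ) : EufFormula Fn Pr :=
  ((List.range' 1 k).map (fun l => EufFormula.eq (hatS i l) (hatS j l))).foldr .and .tt

/-- The nested-ITE term `V_{i,j}`. -/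
def Vterm {Fn Pr : Type} (vf : ℕ → Fn) (hatS : ℕ → ℕ → EufTerm Fn Pr) (k i : ℕ) :
    ℕ → EufTerm Fn Pr
  | j =>
    if h : j < i then
      .ite (Cform hatS k i j) (.app (vf j) []) (Vterm vf hatS k i (j+1))
    else .app (vf i) []
termination_by j => i - j
decreasing_by omega

/-- The nested-ITE term `U_i` replacing the i-th f-application. -/
def Uterm {Fn Pr : Type} (vf : ℕ → Fn) (hatS : ℕ → ℕ → EufTerm Fn Pr) (k i : ℕ) :
    EufTerm Fn Pr :=
  Vterm vf hatS k i 1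

/-- `stepT … i E = E⁽ⁱ⁾` for terms. -/
noncomputable def stepT {Fn Pr : Type} (Ts : ℕ → EufTerm Fn Pr) (vf : ℕ → Fn)
    (hatS : ℕ → ℕ → EufTerm Fn Pr) (k : ℕ) : ℕ → EufTerm Fn Pr → EufTerm Fn Pr
  | 0, E => E
  | i+1, E =>
      substT (stepT Ts vf hatS k i (Ts (i+1))) (Uterm vf hatS k (i+1)) (stepT Ts vf hatS k i E)

/-- `stepF … i E = E⁽ⁱ⁾` for formulas. -/
noncomputable def stepF {Fn Pr : Type} (Ts : ℕ → EufTerm Fn Pr) (vf : ℕ → Fn)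
    (hatS : ℕ → ℕ → EufTerm Fn Pr) (k : ℕ) : ℕ → EufFormula Fn Pr → EufFormula Fn Pr
  | 0, E => E
  | i+1, E =>
      substF (stepT Ts vf hatS k i (Ts (i+1))) (Uterm vf hatS k (i+1)) (stepF Ts vf hatS k i E)

/-- The f-order of a term: the largest index `i ∈ [1,n]` with `Ts i` occurring in `E`. -/
noncomputable def fordT {Fn Pr : Type} (n : ℕ) (Ts : ℕ → EufTerm Fn Pr)
    (E : EufTerm Fn Pr) : ℕ :=
  sSup {i | 1 ≤ i ∧ i ≤ n ∧ TermInT (Ts i) E}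

/-- The f-order of a formula. -/
noncomputable def fordF {Fn Pr : Type} (n : ℕ) (Ts : ℕ → EufTerm Fn Pr)
    (E : EufFormula Fn Pr) : ℕ :=
  sSup {i | 1 ≤ i ∧ i ≤ n ∧ TermInF (Ts i) E}

/-- `Ê` for terms: `E⁽ᵐ⁾` where `m` is the f-order of `E`. -/
noncomputable def hatT {Fn Pr : Type} (n : ℕ) (Ts : ℕ → EufTerm Fn Pr) (vf : ℕ → Fn)
    (hatS : ℕ → ℕ → EufTerm Fn Pr) (k : ℕ) (E : EufTerm Fn Pr) : EufTerm Fn Pr :=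
  stepT Ts vf hatS k (fordT n Ts E) E

/-- `Ê` for formulas. -/
noncomputable def hatF {Fn Pr : Type} (n : ℕ) (Ts : ℕ → EufTerm Fn Pr) (vf : ℕ → Fn)
    (hatS : ℕ → ℕ → EufTerm Fn Pr) (k : ℕ) (E : EufFormula Fn Pr) : EufFormula Fn Pr :=
  stepF Ts vf hatS k (fordF n Ts E) E

/-- Hypotheses of the nested-ITE elimination of the function symbol `f` from `G`:
`Ts 1, …, Ts n` are the syntactically distinct f-application terms of `G` (ordered so that
subterms precede superterms) with argument terms `S i 1, …, S i k`; the `vf i` are fresh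
domain variables; and `hatS i l` is the transformed argument term `Ŝ_{i,l}`. -/
structure ElimHyps {Fn Pr : Type} (G : EufFormula Fn Pr) (f : Fn) (k n : ℕ)
    (Ts : ℕ → EufTerm Fn Pr) (S : ℕ → ℕ → EufTerm Fn Pr) (vf : ℕ → Fn)
    (hatS : ℕ → ℕ → EufTerm Fn Pr) : Prop where
  k_pos : 1 ≤ k
  ts_app : ∀ i, 1 ≤ i → i ≤ n → Ts i = EufTerm.app f ((List.range' 1 k).map (S i))
  ts_occurs : ∀ i, 1 ≤ i → i ≤ n → TermInF (Ts i) G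
  ts_distinct : ∀ i j, 1 ≤ i → i ≤ n → 1 ≤ j → j ≤ n → Ts i = Ts j → i = j
  ts_complete : ∀ args, TermInF (EufTerm.app f args) G →
      ∃ i, 1 ≤ i ∧ i ≤ n ∧ EufTerm.app f args = Ts i
  ts_order : ∀ i j, 1 ≤ i → i ≤ n → 1 ≤ j → j ≤ n → TermInT (Ts i) (Ts j) → i ≠ j → i < j
  vf_fresh : ∀ i, 1 ≤ i → i ≤ n → ¬ FnInF (vf i) G
  vf_inj : ∀ i j, 1 ≤ i → i ≤ n → 1 ≤ j → j ≤ n → vf i = vf j → i = j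
  vf_ne_f : ∀ i, 1 ≤ i → i ≤ n → vf i ≠ f
  hatS_spec : ∀ j l, 1 ≤ j → j ≤ n → 1 ≤ l → l ≤ k →
      hatS j l = stepT Ts vf hatS k (fordT n Ts (S j l)) (S j l)

/-- `Ĝ = G⁽ⁿ⁾`: the result of eliminating `f` from `G`. -/
noncomputable def elimResult {Fn Pr : Type} (G : EufFormula Fn Pr) (n : ℕ)
    (Ts : ℕ → EufTerm Fn Pr) (vf : ℕ → Fn) (hatS : ℕ → ℕ → EufTerm Fn Pr) (k : ℕ) :
    EufFormula Fn Pr :=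
  stepF Ts vf hatS k n G

theorem evalF_conj {Fn Pr D : Type} (I : Interp Fn Pr D) (a b : ℕ → EufTerm Fn Pr)
    (L : List ℕ) :
    evalF I ((L.map (fun l => EufFormula.eq (a l) (b l))).foldr .and .tt) = true ↔
      ∀ l ∈ L, evalT I (a l) = evalT I (b l) := by
  induction L with
  | nil => simp [evalF]
  | cons x L ih => simp [evalF, ih]

theorem evalF_Cform {Fn Pr D : Type} (I : Interp Fn Pr D) (hatS : ℕ → ℕ → EufTerm Fn Pr)
    (k i j : ℕ) :
    evalF I (Cform hatS k i j) = true ↔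
      ∀ l, 1 ≤ l → l ≤ k → evalT I (hatS j l) = evalT I (hatS i l) := by
  unfold Cform
  rw [evalF_conj]
  constructor
  · intro h l h1 h2
    exact (h l (List.mem_range'_1.2 ⟨h1, by omega⟩)).symm
  · intro h l hl
    have := List.mem_range'_1.1 hl
    exact (h l this.1 (by omega)).symm

theorem evalT_Vterm {Fn Pr D : Type} (k : ℕ) (vf : ℕ → Fn)
    (hatS : ℕ → ℕ → EufTerm Fn Pr) (I : Interp Fn Pr D) (i j : ℕ) (hji : j ≤ i)
    (hm : ∀ l, 1 ≤ l → l ≤ k → evalT I (hatS j l) = evalT I (hatS i l))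
    (d : ℕ) : ∀ m, m + d = j →
    (∀ m', m ≤ m' → m' < j →
      ¬ ∀ l, 1 ≤ l → l ≤ k → evalT I (hatS m' l) = evalT I (hatS i l)) →
    evalT I (Vterm vf hatS k i m) = I.fn (vf j) [] := by
  induction d with
  | zero =>
    intro m hmj _
    obtain rfl : m = j := by omega
    rw [Vterm]
    split
    · rw [evalT, if_pos ((evalF_Cform I hatS k i m).2 hm)]
      simp [evalT]
    · obtain rfl : m = i := by omega
      simp [evalT]
  | succ d ih =>
    intro m hmj hno
    rw [Vterm, dif_pos (by omega), evalT,
      if_neg (fun h => hno m le_rfl (by omega) ((evalF_Cform I hatS k i m).1 h))]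
    exact ih (m+1) (by omega) (fun m' h => hno m' (by omega))

/-- For any interpretation `I` and `1 ≤ i ≤ n`, the nested-ITE term `U_i`
evaluates to `I(vf_j)` where `j = lm_I(i)` is the least matching value of `i` under `I`. -/
theorem U_lemma {Fn Pr D : Type} (k n : ℕ) (vf : ℕ → Fn)
    (hatS : ℕ → ℕ → EufTerm Fn Pr) (I : Interp Fn Pr D) (i : ℕ)
    (h1 : 1 ≤ i) (h2 : i ≤ n) (j : ℕ)
    (hj : j = sInf {m | 1 ≤ m ∧ m ≤ i ∧
            ∀ l, 1 ≤ l → l ≤ k → evalT I (hatS m l) = evalT I (hatS i l)}) :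
    evalT I (Uterm vf hatS k i) = I.fn (vf j) [] := by
  have hmem := Nat.sInf_mem (s := {m | 1 ≤ m ∧ m ≤ i ∧
      ∀ l, 1 ≤ l → l ≤ k → evalT I (hatS m l) = evalT I (hatS i l)})
      ⟨i, h1, le_rfl, fun _ _ _ => rfl⟩
  rw [← hj] at hmem
  obtain ⟨a, b, c⟩ := hmem
  refine evalT_Vterm k vf hatS I i j b c (j - 1) 1 (by omega) ?_
  intro m' hm1 hm2 h
  rw [hj] at hm2
  exact Nat.notMem_of_lt_sInf hm2 ⟨hm1, by omega, h⟩
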